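/- arXiv:2407.13114 — 2 statements merged into one kernel-verified Lean document; each statement's English description precedes it below -/
import Mathlib

section
/- For every integer k ≥ 2 there exists a constant C > 0 such that for every digit block B of length k and every N ∈ ℕ with N ≥ 1, |occ(c, B, N) − N·10^{−k}| ≤ C · 10^{n(N)−k}, where the constant C does not depend on B. -/
open scoped Classical

/-- The `i`-th decimal digit (for `i ≥ 1`) of a real number `α`, using the floor
convention, which for numbers admitting two decimal expansions selects the
expansion ending in a tail of `0`s. -/
noncomputable def digit (α : ℝ) (i : ℕ) : ℕ := (⌊α * 10 ^ i⌋ % 10).toNat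

/-- Number of occurrences of the digit block `B` (of length `k`) as consecutive
digits among the first `N` decimal digits of `α`:
`occ α B N = #{i : 1 ≤ i ≤ N - k + 1 ∧ (α_i, …, α_{i+k-1}) = B}`. -/
noncomputable def occ {k : ℕ} (α : ℝ) (B : Fin k → Fin 10) (N : ℕ) : ℕ :=
  ((Finset.Icc 1 N).filter fun i =>
    i + k ≤ N + 1 ∧ ∀ j : Fin k, digit α (i + (j : ℕ)) = (B j : ℕ)).card

/-- Discrepancy of the first `N` terms of a sequence `(x_n)_{n ≥ 1}` of points of `[0,1)`:
the supremum over `0 ≤ a < b < 1` of `|#{n ≤ N : x n ∈ [a,b)}/N - (b - a)|`. -/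
noncomputable def discSeq (x : ℕ → ℝ) (N : ℕ) : ℝ :=
  sSup {d : ℝ | ∃ a b : ℝ, 0 ≤ a ∧ a < b ∧ b < 1 ∧
    d = |(((Finset.Icc 1 N).filter fun n => x n ∈ Set.Ico a b).card : ℝ) / N - (b - a)|}

/-- Discrepancy of a real number for base 10: the discrepancy of the sequence
`(10^(n-1) α mod 1)_{n ≥ 1}`. -/
noncomputable def D (α : ℝ) (N : ℕ) : ℝ :=
  discSeq (fun n => Int.fract (10 ^ (n - 1) * α)) N

/-- `T v` is the total number of digits in the concatenation of the decimal
representations of `1, 2, …, v`. -/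
def T (v : ℕ) : ℕ := ∑ j ∈ Finset.Icc 1 v, (Nat.digits 10 j).length

/-- The Champernowne constant `c = 0.123456789101112…`, the concatenation of the
positive integers in base 10: the term `m` ends at decimal position `T m`. -/
noncomputable def champ : ℝ := ∑' m : ℕ, (m : ℝ) / 10 ^ T m

/-- `vOf N` is the least `v` with `T v ≥ N` (the term of the concatenation
containing the `N`-th digit). -/
noncomputable def vOf (N : ℕ) : ℕ := sInf {v | N ≤ T v}

/-- `nOf N` is the number of decimal digits of `vOf N`. -/
noncomputable def nOf (N : ℕ) : ℕ := (Nat.digits 10 (vOf N)).length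

/-- Number of non-overlapping occurrences of the block `B` (length `k`) in the string
`s_ℓ` (the concatenation of all `ℓ`-digit integers in increasing order): the number of
pairs `(y, j)` with `10^(ℓ-1) ≤ y < 10^ℓ`, `1 ≤ j ≤ ℓ - k + 1`, such that the digits of
`y` in positions `j, …, j + k - 1` (counted from the left) equal `B`. -/
def occNoSeg {k : ℕ} (B : Fin k → Fin 10) (ℓ : ℕ) : ℕ :=
  ((Finset.Ico (10 ^ (ℓ - 1)) (10 ^ ℓ) ×ˢ Finset.Icc 1 (ℓ - k + 1)).filter fun p =>
    ∀ i : Fin k, p.1 / 10 ^ (ℓ - (p.2 + (i : ℕ))) % 10 = (B i : ℕ)).card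

/-- Number of occurrences of the block `B` (length `k ≤ ℓ`) in the string `s_ℓ` that
straddle the boundary between two consecutive `ℓ`-digit terms `y` and `y + 1`:
the number of pairs `(y, j)` with `10^(ℓ-1) ≤ y < 10^ℓ - 1` and `1 ≤ j ≤ k - 1` such
that the last `j` digits of `y` are `(b₁, …, b_j)` and the first `k - j` digits of
`y + 1` are `(b_{j+1}, …, b_k)`. -/
def occOSeg {k : ℕ} (B : Fin k → Fin 10) (ℓ : ℕ) : ℕ :=
  ((Finset.Ico (10 ^ (ℓ - 1)) (10 ^ ℓ - 1) ×ˢ Finset.Ico 1 k).filter fun p =>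
    (∀ i : Fin k, (i : ℕ) < p.2 → p.1 / 10 ^ (p.2 - 1 - (i : ℕ)) % 10 = (B i : ℕ)) ∧
    (∀ i : Fin k, p.2 ≤ (i : ℕ) →
      (p.1 + 1) / 10 ^ (ℓ - 1 - ((i : ℕ) - p.2)) % 10 = (B i : ℕ))).card

/-!
The digit lying `e` places before the end of the term `y` of the concatenation is the digit of `y`
of weight `10 ^ e`: truncating `champ` after the term `y` leaves the concatenation of `1, …, y`.

Sort the starting positions of blocks by the pair `(y, e)`. For a fixed place `e ≥ k - 1` the block
starting there lies inside the term `y`, so that it equals `B` exactly when `y` falls into one fixed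
class of a partition of the integers into `10 ^ k` classes which is periodic with period
`10 ^ (e + 1)`. As `y` runs over an interval, the number of occurrences therefore deviates from its
mean by at most `10 ^ (e + 1)`, and these errors sum to `O(10 ^ n)`. The remaining `k - 1` places
contain at most `10 ^ n` starting positions each.
-/

open Finset Function

section PeriodicSums

lemma sum_Ico_add_of_periodic {M : Type*} [AddCommMonoid M] {f : ℕ → M} {p : ℕ}
    (hf : Periodic f p) (a : ℕ) : ∑ i ∈ Ico a (a + p), f i = ∑ i ∈ range p, f i := by
  have hmod : f ∘ (· % p) = f := funext hf.map_mod_nat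
  calc ∑ i ∈ Ico a (a + p), f i
      = (((Multiset.Ico a (a + p)).map (· % p)).map f).sum := by rw [Multiset.map_map, hmod]; rfl
    _ = ∑ i ∈ range p, f i := by rw [Nat.multiset_Ico_map_mod]; rfl

lemma norm_sum_Ico_le_of_periodic {E : Type*} [SeminormedAddCommGroup E] {f : ℕ → E} {p : ℕ}
    {C : ℝ} (hp : 0 < p) (hf : Periodic f p) (hmean : ∑ i ∈ range p, f i = 0)
    (hC : ∀ i, ‖f i‖ ≤ C) (m n : ℕ) : ‖∑ i ∈ Ico m n, f i‖ ≤ p * C := by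
  have hC0 : 0 ≤ C := (norm_nonneg _).trans (hC 0)
  induction n using Nat.strong_induction_on with
  | _ n ih =>
    rcases le_total (m + p) n with hmn | hnm
    · have hperiod : ∑ i ∈ Ico (n - p) n, f i = 0 := by
        rw [← hmean, ← sum_Ico_add_of_periodic hf (n - p), Nat.sub_add_cancel (by omega)]
      rw [← sum_Ico_consecutive f (by omega : m ≤ n - p) (n.sub_le p), hperiod, add_zero]
      exact ih (n - p) (by omega)
    · calc ‖∑ i ∈ Ico m n, f i‖ ≤ ∑ _i ∈ Ico m n, C := norm_sum_le_of_le _ fun i _ ↦ hC i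
        _ = (n - m : ℕ) * C := by simp
        _ ≤ p * C := by gcongr; omega

lemma abs_indicator_sub_le_one (P : Prop) [Decidable P] {x : ℝ} (hx₀ : 0 ≤ x) (hx₁ : x ≤ 1) :
    |(if P then (1 : ℝ) else 0) - x| ≤ 1 := by
  rw [abs_le]
  split_ifs <;> constructor <;> linarith

lemma card_filter_range_div_mod_eq {p q c : ℕ} (hp : 0 < p) (hc : c < q) :
    #{y ∈ range (p * q) | y / p % q = c} = p := by
  have hfiber : {y ∈ range (p * q) | y / p % q = c} = Ico (c * p) ((c + 1) * p) := by
    ext y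
    rw [mem_filter, mem_range, mem_Ico, ← Nat.le_div_iff_mul_le hp, ← Nat.div_lt_iff_lt_mul hp,
      mul_comm p q, ← Nat.div_lt_iff_lt_mul hp]
    constructor
    · rintro ⟨hlt, hmod⟩
      rw [Nat.mod_eq_of_lt hlt] at hmod
      omega
    · rintro ⟨hle, hlt⟩
      obtain rfl : y / p = c := by omega
      exact ⟨hc, Nat.mod_eq_of_lt hc⟩
  rw [hfiber, Nat.card_Ico, add_mul, one_mul, Nat.add_sub_cancel_left]

lemma abs_sum_Ico_indicator_div_mod_sub_le {p q c : ℕ} (hp : 0 < p) (hc : c < q) (m n : ℕ) :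
    |∑ y ∈ Ico m n, ((if y / p % q = c then (1 : ℝ) else 0) - 1 / q)| ≤ p * q := by
  have hq : 0 < q := c.zero_le.trans_lt hc
  have hperiodic : Periodic (fun y ↦ (if y / p % q = c then (1 : ℝ) else 0) - 1 / q) (p * q) :=
    fun y ↦ by simp only [Nat.add_mul_div_left _ _ hp, Nat.add_mod_right]
  have hmean : ∑ y ∈ range (p * q), ((if y / p % q = c then (1 : ℝ) else 0) - 1 / q) = 0 := by
    rw [sum_sub_distrib, sum_boole, card_filter_range_div_mod_eq hp hc]
    simp [hq.ne']
  have hbound (y : ℕ) : |(if y / p % q = c then (1 : ℝ) else 0) - 1 / q| ≤ 1 :=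
    abs_indicator_sub_le_one _ (by positivity) (by simpa using Nat.cast_inv_le_one q)
  simpa using norm_sum_Ico_le_of_periodic (mul_pos hp hq) hperiodic hmean hbound m n

end PeriodicSums

section Digits

lemma digit_sub {α : ℝ} (hα : 0 ≤ α) {e n : ℕ} (hen : e ≤ n) :
    digit α (n - e) = ⌊α * 10 ^ n⌋₊ / 10 ^ e % 10 := by
  have hshift : α * 10 ^ (n - e) = α * 10 ^ n / ((10 ^ e : ℕ) : ℝ) := by
    rw [pow_sub₀ _ (by norm_num) hen, ← div_eq_mul_inv, mul_div_assoc]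
    push_cast
    rfl
  rw [digit, ← Int.natCast_floor_eq_floor (by positivity), hshift, Nat.floor_div_natCast]
  omega

lemma mod_pow_div_pow_mod {b i k : ℕ} (hik : i < k) (n : ℕ) :
    n % b ^ k / b ^ i % b = n / b ^ i % b := by
  rw [← Nat.add_sub_cancel' hik.le, pow_add, Nat.mod_mul_right_div_self,
    Nat.mod_mod_of_dvd _ (dvd_pow_self b (by omega))]

/-- The integer whose base `b` representation is the block `B`, most significant digit first and
padded with leading zeros to length `k`. It turns a comparison of blocks into one of residues. -/
def blockVal {b k : ℕ} (B : Fin k → Fin b) : Fin (b ^ k) :=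
  finFunctionFinEquiv (B ∘ Fin.rev)

lemma mod_pow_eq_blockVal_iff {b k : ℕ} (B : Fin k → Fin b) (z : ℕ) :
    z % b ^ k = blockVal B ↔ ∀ j : Fin k, z / b ^ (k - 1 - (j : ℕ)) % b = B j := by
  have hz : z % b ^ k < b ^ k := Nat.mod_lt _ (blockVal B).pos
  calc z % b ^ k = blockVal B
      ↔ finFunctionFinEquiv.symm ⟨z % b ^ k, hz⟩ = B ∘ Fin.rev := by
        rw [Equiv.symm_apply_eq, Fin.ext_iff, blockVal]
    _ ↔ ∀ i : Fin k, z / b ^ (i : ℕ) % b = B i.rev := by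
        simp only [funext_iff, Fin.ext_iff, finFunctionFinEquiv_symm_apply_val, comp_apply,
          mod_pow_div_pow_mod (Fin.is_lt _)]
    _ ↔ ∀ j : Fin k, z / b ^ (k - 1 - (j : ℕ)) % b = B j := by
        rw [← Fin.revPerm.forall_congr_right]
        simp only [Fin.revPerm_apply, Fin.rev_rev, Fin.val_rev, Nat.sub_sub, add_comm]

end Digits

section Lengths

lemma T_zero : T 0 = 0 := rfl

lemma T_succ (y : ℕ) : T (y + 1) = T y + (Nat.digits 10 (y + 1)).length :=
  sum_Icc_succ_top (by omega) _

lemma length_digits_le_T (y : ℕ) : (Nat.digits 10 y).length ≤ T y := by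
  cases y with
  | zero => simp
  | succ y => exact T_succ y ▸ Nat.le_add_left _ _

lemma le_T (y : ℕ) : y ≤ T y := by
  induction y with
  | zero => simp
  | succ y ih =>
    have : 0 < (Nat.digits 10 (y + 1)).length := by simp
    rw [T_succ]
    omega

lemma le_T_vOf (N : ℕ) : N ≤ T (vOf N) :=
  Nat.sInf_mem (s := {v | N ≤ T v}) ⟨N, le_T N⟩

lemma T_vOf_le (N : ℕ) : T (vOf N) ≤ N + nOf N := by
  unfold nOf
  cases hv : vOf N with
  | zero => simp [T_zero]
  | succ v =>
    have hlt : T v < N := not_le.mp (Nat.notMem_of_lt_sInf (s := {v | N ≤ T v})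
      (hv ▸ v.lt_succ_self : v < vOf N))
    rw [T_succ]
    omega

lemma sum_Ioc_add_eq_sum_range_sub {M : Type*} [AddCommMonoid M] (f : ℕ → M) (a L : ℕ) :
    ∑ i ∈ Ioc a (a + L), f i = ∑ e ∈ range L, f (a + L - e) := by
  refine sum_nbij' (a + L - ·) (a + L - ·) ?_ ?_ ?_ ?_ ?_ <;> intro i hi <;>
    simp only [mem_Ioc, mem_range] at hi ⊢
  all_goals first | omega | (congr 1; omega)

lemma sum_Icc_T {M : Type*} [AddCommMonoid M] (f : ℕ → M) (v : ℕ) :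
    ∑ i ∈ Icc 1 (T v), f i =
      ∑ y ∈ Icc 1 v, ∑ e ∈ range (Nat.digits 10 y).length, f (T y - e) := by
  induction v with
  | zero => simp [T_zero]
  | succ v ih =>
    rw [sum_Icc_succ_top (by omega), ← ih, T_succ, ← sum_Ioc_add_eq_sum_range_sub]
    exact (sum_Ioc_consecutive f (T v).zero_le (Nat.le_add_right _ _)).symm

lemma sum_Icc_T_eq_sum_place {M : Type*} [AddCommMonoid M] (f : ℕ → M) (v : ℕ) :
    ∑ i ∈ Icc 1 (T v), f i =
      ∑ e ∈ range (Nat.digits 10 v).length, ∑ y ∈ Ico (10 ^ e) (v + 1), f (T y - e) := by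
  rw [sum_Icc_T]
  refine sum_comm' fun y e ↦ ?_
  have : 0 < 10 ^ e := by positivity
  simp only [mem_Icc, mem_range, mem_Ico, Nat.lt_digits_length_iff (by norm_num : 1 < 10)]
  omega

end Lengths

section Champernowne

/-- The integer whose decimal representation is the concatenation of those of `1, …, y`, that is,
the first `T y` decimals of `champ` read as an integer. -/
def champPrefix : ℕ → ℕ
  | 0 => 0
  | y + 1 => champPrefix y * 10 ^ (Nat.digits 10 (y + 1)).length + (y + 1)

lemma sum_range_champ (y : ℕ) :
    ∑ m ∈ range (y + 1), (m : ℝ) / 10 ^ T m = champPrefix y / 10 ^ T y := by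
  induction y with
  | zero => simp [champPrefix]
  | succ y ih =>
    rw [sum_range_succ, ih, T_succ, champPrefix, pow_add]
    push_cast
    field_simp

lemma champPrefix_succ_add_one_div_le (y : ℕ) :
    ((champPrefix (y + 1) : ℝ) + 1) / 10 ^ T (y + 1) ≤ (champPrefix y + 1) / 10 ^ T y := by
  have hy : (y : ℝ) + 1 + 1 ≤ 10 ^ (Nat.digits 10 (y + 1)).length := by
    exact_mod_cast Nat.lt_base_pow_length_digits (b := 10) (m := y + 1) (by norm_num)
  rw [T_succ, pow_add, mul_comm, ← div_div, champPrefix]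
  gcongr
  rw [div_le_iff₀ (by positivity)]
  push_cast
  linarith

lemma champPrefix_succ_add_one_div_lt {y : ℕ} (hy : y + 2 < 10 ^ (Nat.digits 10 (y + 1)).length) :
    ((champPrefix (y + 1) : ℝ) + 1) / 10 ^ T (y + 1) < (champPrefix y + 1) / 10 ^ T y := by
  have hy : (y : ℝ) + 2 < 10 ^ (Nat.digits 10 (y + 1)).length := by exact_mod_cast hy
  rw [T_succ, pow_add, mul_comm, ← div_div, champPrefix]
  gcongr
  rw [div_lt_iff₀ (by positivity)]
  push_cast
  linarith

lemma antitone_champPrefix_add_one_div : Antitone fun y ↦ ((champPrefix y : ℝ) + 1) / 10 ^ T y :=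
  antitone_nat_of_succ_le champPrefix_succ_add_one_div_le

lemma sum_range_champ_le (n y : ℕ) :
    ∑ m ∈ range n, (m : ℝ) / 10 ^ T m ≤ (champPrefix y + 1) / 10 ^ T y := by
  calc ∑ m ∈ range n, (m : ℝ) / 10 ^ T m
      ≤ ∑ m ∈ range (y + n + 1), (m : ℝ) / 10 ^ T m :=
        sum_le_sum_of_subset_of_nonneg (range_mono (by omega)) fun m _ _ ↦ by positivity
    _ = champPrefix (y + n) / 10 ^ T (y + n) := sum_range_champ _
    _ ≤ (champPrefix (y + n) + 1) / 10 ^ T (y + n) := by gcongr; linarith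
    _ ≤ (champPrefix y + 1) / 10 ^ T y := antitone_champPrefix_add_one_div (Nat.le_add_right y n)

lemma summable_champ : Summable fun m : ℕ ↦ (m : ℝ) / 10 ^ T m :=
  summable_of_sum_range_le (fun _ ↦ by positivity) fun n ↦ sum_range_champ_le n 0

lemma champ_nonneg : 0 ≤ champ := tsum_nonneg fun _ ↦ by positivity

lemma champPrefix_div_le_champ (y : ℕ) : champPrefix y / 10 ^ T y ≤ champ :=
  sum_range_champ y ▸ summable_champ.sum_le_tsum _ fun _ _ ↦ by positivity

lemma champ_le_champPrefix_add_one_div (y : ℕ) : champ ≤ (champPrefix y + 1) / 10 ^ T y :=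
  Real.tsum_le_of_sum_range_le (fun _ ↦ by positivity) fun n ↦ sum_range_champ_le n y

lemma champ_lt_champPrefix_add_one_div (y : ℕ) : champ < (champPrefix y + 1) / 10 ^ T y := by
  -- The upper bound at `z + 1` is strictly below the one at `z` unless `z + 1 = 9…9`, which is
  -- excluded for `z + 1 = 10 ^ y`.
  obtain ⟨z, hz⟩ : ∃ z, 10 ^ y = z + 1 := Nat.exists_eq_add_of_le' (Nat.one_le_pow y 10 (by norm_num))
  have hyz : y ≤ z := Nat.le_of_lt_succ ((Nat.lt_pow_self (by norm_num)).trans_eq hz)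
  have hlen : y + 1 ≤ (Nat.digits 10 (z + 1)).length :=
    (Nat.lt_digits_length_iff (by norm_num) _).mpr hz.le
  have hz_lt : z + 2 < 10 ^ (Nat.digits 10 (z + 1)).length :=
    calc z + 2 < 10 ^ (y + 1) := by rw [pow_succ, hz]; omega
      _ ≤ 10 ^ (Nat.digits 10 (z + 1)).length := by gcongr; norm_num
  calc champ ≤ (champPrefix (z + 1) + 1) / 10 ^ T (z + 1) := champ_le_champPrefix_add_one_div _
    _ < (champPrefix z + 1) / 10 ^ T z := champPrefix_succ_add_one_div_lt hz_lt
    _ ≤ (champPrefix y + 1) / 10 ^ T y := antitone_champPrefix_add_one_div hyz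

lemma floor_champ_mul_pow_T (y : ℕ) : ⌊champ * 10 ^ T y⌋₊ = champPrefix y := by
  rw [Nat.floor_eq_iff (mul_nonneg champ_nonneg (by positivity))]
  exact ⟨(div_le_iff₀ (by positivity)).mp (champPrefix_div_le_champ y),
    (lt_div_iff₀ (by positivity)).mp (champ_lt_champPrefix_add_one_div y)⟩

lemma champPrefix_mod_pow_length_digits (y : ℕ) :
    champPrefix y % 10 ^ (Nat.digits 10 y).length = y := by
  cases y with
  | zero => rfl
  | succ y =>
    rw [champPrefix, Nat.mul_add_mod_self_right,
      Nat.mod_eq_of_lt (Nat.lt_base_pow_length_digits (by norm_num))]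

lemma digit_champ_T_sub {e y : ℕ} (he : e < (Nat.digits 10 y).length) :
    digit champ (T y - e) = y / 10 ^ e % 10 := by
  rw [digit_sub champ_nonneg (he.le.trans (length_digits_le_T y)), floor_champ_mul_pow_T,
    ← mod_pow_div_pow_mod he, champPrefix_mod_pow_length_digits]

lemma digit_champ_T_sub_add_eq_iff {k : ℕ} (B : Fin k → Fin 10) {e y : ℕ} (hke : k ≤ e + 1)
    (he : e < (Nat.digits 10 y).length) :
    (∀ j : Fin k, digit champ (T y - e + j) = B j) ↔
      y / 10 ^ (e + 1 - k) % 10 ^ k = blockVal B := by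
  rw [mod_pow_eq_blockVal_iff]
  refine forall_congr' fun j ↦ ?_
  have hj := j.is_lt
  have hT := length_digits_le_T y
  rw [show T y - e + j = T y - (e - j) by omega, digit_champ_T_sub (by omega),
    Nat.div_div_eq_div_mul, ← pow_add, show e + 1 - k + (k - 1 - j) = e - j by omega]

end Champernowne

section Deviation

/-- The indicator of an occurrence of `B` at position `i` of `α`, minus its expected value
`10 ^ (-k)`. Its sums measure the deviation of the number of occurrences from its mean. -/
noncomputable def occDev {k : ℕ} (α : ℝ) (B : Fin k → Fin 10) (i : ℕ) : ℝ :=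
  (if ∀ j : Fin k, digit α (i + j) = B j then 1 else 0) - 1 / 10 ^ k

variable {k : ℕ} (B : Fin k → Fin 10)

lemma abs_occDev_le_one (α : ℝ) (i : ℕ) : |occDev α B i| ≤ 1 :=
  abs_indicator_sub_le_one _ (by positivity)
    (div_le_one_of_le₀ (one_le_pow₀ (by norm_num)) (by positivity))

lemma abs_sum_occDev_le_card {ι : Type*} (α : ℝ) (s : Finset ι) (g : ι → ℕ) :
    |∑ i ∈ s, occDev α B (g i)| ≤ #s := by
  simpa using norm_sum_le_of_le (f := fun i ↦ occDev α B (g i)) s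
    fun i _ ↦ abs_occDev_le_one B α (g i)

lemma occ_le_card_filter_Icc (α : ℝ) (N : ℕ) :
    occ α B N ≤ #{i ∈ Icc 1 N | ∀ j : Fin k, digit α (i + j) = B j} :=
  card_le_card (monotone_filter_right _ fun _ _ h ↦ h.2)

lemma card_filter_Icc_le_occ_add (α : ℝ) (N : ℕ) :
    #{i ∈ Icc 1 N | ∀ j : Fin k, digit α (i + j) = B j} ≤ occ α B N + k := by
  set fitting := {i ∈ Icc 1 N | i + k ≤ N + 1 ∧ ∀ j : Fin k, digit α (i + j) = B j}
  have hsub : {i ∈ Icc 1 N | ∀ j : Fin k, digit α (i + j) = B j} ⊆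
      fitting ∪ Ioc (N + 1 - k) N := by
    intro i hi
    simp only [fitting, mem_union, mem_filter, mem_Icc, mem_Ioc] at hi ⊢
    rcases le_or_gt (i + k) (N + 1) with h | h
    · exact .inl ⟨hi.1, h, hi.2⟩
    · exact .inr (by omega)
  calc _ ≤ #(fitting ∪ Ioc (N + 1 - k) N) := card_le_card hsub
    _ ≤ #fitting + #(Ioc (N + 1 - k) N) := card_union_le _ _
    _ ≤ occ α B N + k := by rw [Nat.card_Ioc]; exact Nat.add_le_add_left (by omega) _

lemma abs_occ_sub_sub_sum_occDev_le (α : ℝ) (N : ℕ) :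
    |(occ α B N : ℝ) - N / 10 ^ k - ∑ i ∈ Icc 1 N, occDev α B i| ≤ k := by
  have hle : (occ α B N : ℝ) ≤ #{i ∈ Icc 1 N | ∀ j : Fin k, digit α (i + j) = B j} := by
    exact_mod_cast occ_le_card_filter_Icc B α N
  have hge : (#{i ∈ Icc 1 N | ∀ j : Fin k, digit α (i + j) = B j} : ℝ) ≤ occ α B N + k := by
    exact_mod_cast card_filter_Icc_le_occ_add B α N
  have hsum : ∑ i ∈ Icc 1 N, occDev α B i =
      #{i ∈ Icc 1 N | ∀ j : Fin k, digit α (i + j) = B j} - (N : ℝ) / 10 ^ k := by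
    simp only [occDev, sum_sub_distrib, sum_boole, sum_const, Nat.card_Icc, nsmul_eq_mul,
      Nat.add_sub_cancel, mul_one_div]
  rw [hsum, abs_le]
  constructor <;> linarith

lemma abs_sum_Icc_occDev_sub_le (α : ℝ) {M N : ℕ} (hNM : N ≤ M) :
    |∑ i ∈ Icc 1 M, occDev α B i - ∑ i ∈ Icc 1 N, occDev α B i| ≤ (M : ℝ) - N := by
  have hsplit : ∑ i ∈ Icc 1 N, occDev α B i + ∑ i ∈ Ioc N M, occDev α B i =
      ∑ i ∈ Icc 1 M, occDev α B i := sum_Ioc_consecutive _ N.zero_le hNM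
  rw [← hsplit, add_sub_cancel_left, ← Nat.cast_sub hNM, ← Nat.card_Ioc]
  exact abs_sum_occDev_le_card B α (Ioc N M) id

lemma abs_sum_occDev_champ_place_le {e m : ℕ} (hke : k ≤ e + 1) (hm : 10 ^ e ≤ m) (n : ℕ) :
    |∑ y ∈ Ico m n, occDev champ B (T y - e)| ≤ 10 ^ (e + 1) := by
  have hocc (y : ℕ) (hy : y ∈ Ico m n) : occDev champ B (T y - e) =
      (if y / 10 ^ (e + 1 - k) % 10 ^ k = blockVal B then 1 else 0) - 1 / ((10 ^ k : ℕ) : ℝ) := by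
    have he : e < (Nat.digits 10 y).length :=
      (Nat.lt_digits_length_iff (by norm_num) y).mpr (hm.trans (mem_Ico.mp hy).1)
    simp only [occDev, digit_champ_T_sub_add_eq_iff B hke he, Nat.cast_pow, Nat.cast_ofNat]
  calc |∑ y ∈ Ico m n, occDev champ B (T y - e)|
      ≤ (10 ^ (e + 1 - k) : ℕ) * (10 ^ k : ℕ) := by
        rw [sum_congr rfl hocc]
        exact abs_sum_Ico_indicator_div_mod_sub_le (by positivity) (blockVal B).is_lt m n
    _ = 10 ^ (e + 1) := by
        push_cast
        rw [← pow_add, Nat.sub_add_cancel hke]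

lemma sum_range_ite_lt_le (k n : ℕ) {x : ℝ} (hx : 0 ≤ x) :
    ∑ e ∈ range n, (if e < k then x else 0) ≤ k * x := by
  rw [← sum_filter, sum_const, nsmul_eq_mul]
  gcongr
  simpa using card_le_card (fun e he ↦ by simp_all : {e ∈ range n | e < k} ⊆ range k)

lemma sum_range_ten_pow_succ_le (n : ℕ) : ∑ e ∈ range n, (10 : ℝ) ^ (e + 1) ≤ 2 * 10 ^ n := by
  simp_rw [pow_succ, ← sum_mul, geom_sum_eq (by norm_num : (10 : ℝ) ≠ 1)]
  linarith [pow_pos (by norm_num : (0 : ℝ) < 10) n]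

lemma abs_sum_Icc_T_occDev_champ_le (v : ℕ) :
    |∑ i ∈ Icc 1 (T v), occDev champ B i| ≤ (k + 2) * 10 ^ (Nat.digits 10 v).length := by
  set n := (Nat.digits 10 v).length
  have hplace (e : ℕ) : |∑ y ∈ Ico (10 ^ e) (v + 1), occDev champ B (T y - e)| ≤
      (if e < k then 10 ^ n else 0) + 10 ^ (e + 1) := by
    rcases lt_or_ge e k with hek | hke
    · have hcard : #(Ico (10 ^ e) (v + 1)) ≤ 10 ^ n := by
        have hv : v < 10 ^ n := Nat.lt_base_pow_length_digits (by norm_num)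
        have he : 0 < 10 ^ e := by positivity
        rw [Nat.card_Ico]
        omega
      calc |∑ y ∈ Ico (10 ^ e) (v + 1), occDev champ B (T y - e)|
          ≤ #(Ico (10 ^ e) (v + 1)) := abs_sum_occDev_le_card B champ _ _
        _ ≤ 10 ^ n := by exact_mod_cast hcard
        _ ≤ (if e < k then 10 ^ n else 0) + 10 ^ (e + 1) := by
            rw [if_pos hek]
            exact le_add_of_nonneg_right (by positivity)
    · rw [if_neg hke.not_gt, zero_add]
      exact abs_sum_occDev_champ_place_le B (by omega) le_rfl _
  calc |∑ i ∈ Icc 1 (T v), occDev champ B i|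
      ≤ ∑ e ∈ range n, |∑ y ∈ Ico (10 ^ e) (v + 1), occDev champ B (T y - e)| := by
        rw [sum_Icc_T_eq_sum_place]
        exact abs_sum_le_sum_abs _ _
    _ ≤ ∑ e ∈ range n, ((if e < k then 10 ^ n else 0) + 10 ^ (e + 1)) :=
        sum_le_sum fun e _ ↦ hplace e
    _ ≤ k * 10 ^ n + 2 * 10 ^ n := by
        rw [sum_add_distrib]
        exact add_le_add (sum_range_ite_lt_le k n (by positivity)) (sum_range_ten_pow_succ_le n)
    _ = (k + 2) * 10 ^ n := by ring

end Deviation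

theorem occ_champ_estimate_general {k : ℕ} (B : Fin k → Fin 10) (N : ℕ) :
    |(occ champ B N : ℝ) - N / 10 ^ k| ≤ (2 * k + 3) * 10 ^ nOf N := by
  set S : ℕ → ℝ := fun M ↦ ∑ i ∈ Icc 1 M, occDev champ B i
  have hN : |(occ champ B N : ℝ) - N / 10 ^ k - S N| ≤ k := abs_occ_sub_sub_sum_occDev_le B champ N
  have hround : |S (T (vOf N)) - S N| ≤ nOf N := by
    have hT : (T (vOf N) : ℝ) ≤ N + nOf N := by exact_mod_cast T_vOf_le N
    exact (abs_sum_Icc_occDev_sub_le B champ (le_T_vOf N)).trans (by linarith)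
  have hT : |S (T (vOf N))| ≤ (k + 2) * 10 ^ nOf N := abs_sum_Icc_T_occDev_champ_le B (vOf N)
  have hn : (nOf N : ℝ) ≤ 10 ^ nOf N := by
    exact_mod_cast (Nat.lt_pow_self (by norm_num : 1 < 10)).le
  have hk : (k : ℝ) ≤ k * 10 ^ nOf N :=
    le_mul_of_one_le_right k.cast_nonneg (one_le_pow₀ (by norm_num))
  rw [abs_le] at *
  constructor <;> linarith

/-- For every `k ≥ 2` there is `C > 0`, independent of the block `B`, such that for
every digit block `B` of length `k` and every `N ≥ 1`,
`|occ(c, B, N) − N·10^{−k}| ≤ C · 10^{n(N) − k}`. -/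
theorem occ_champ_estimate (k : ℕ) (hk : 2 ≤ k) :
    ∃ C : ℝ, 0 < C ∧ ∀ (B : Fin k → Fin 10) (N : ℕ), 1 ≤ N →
      |(occ champ B N : ℝ) - (N : ℝ) / 10 ^ k| ≤
        C * (10 : ℝ) ^ ((nOf N : ℤ) - (k : ℤ)) := by
  refine ⟨(2 * k + 3) * 10 ^ k, by positivity, fun B N _ ↦ ?_⟩
  rw [mul_assoc, zpow_sub₀ (by norm_num), zpow_natCast, zpow_natCast,
    mul_div_cancel₀ _ (by positivity)]
  exact occ_champ_estimate_general B N
end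

section
/- A real number α ∈ [0,1) is normal in base 10 if and only if its discrepancy for base 10 tends to zero: lim_{N→∞} D(α, N) = 0. -/
open scoped Classical

/-!
A block `B` of `k` digits occurs at position `n` of `α` exactly when `10 ^ (n - 1) * α` mod 1 lies
in the cell `[m / 10 ^ k, (m + 1) / 10 ^ k)`, where `m` is `B` read as an integer. Up to the at most
`k` positions cut off at the end, normality thus says that the shifted sequence visits every
decimal cell with frequency equal to its length. If the discrepancy tends to zero, this holds for
all intervals. Conversely, every interval `[0, t)` lies between two unions of cells of length
`1 / q` whose lengths differ by `1 / q`, so the discrepancy is at most `2 / q` plus twice the sum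
of the errors on the `q` cells.
-/

open Filter Finset Topology

section Frequency

variable {X : Type*}

/-- The proportion of the terms `x 1, …, x N` lying in `s`; it is `0` for `N = 0`. -/
noncomputable def freq (x : ℕ → X) (s : Set X) (N : ℕ) : ℝ :=
  (#{n ∈ Icc 1 N | x n ∈ s} : ℝ) / N

variable (x : ℕ → X) (s : Set X) {t : Set X} (N : ℕ)

theorem freq_nonneg : 0 ≤ freq x s N := by
  unfold freq
  positivity

theorem freq_le_one : freq x s N ≤ 1 := by
  refine div_le_one_of_le₀ ?_ N.cast_nonneg
  exact_mod_cast (card_filter_le _ _).trans (by simp)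

theorem freq_empty : freq x ∅ N = 0 := by
  simp [freq]

variable {s}

theorem freq_mono (h : s ⊆ t) : freq x s N ≤ freq x t N := by
  unfold freq
  gcongr

theorem freq_union (h : Disjoint s t) : freq x (s ∪ t) N = freq x s N + freq x t N := by
  unfold freq
  rw [← add_div, ← Nat.cast_add, ← card_union_of_disjoint, ← filter_or]
  · simp only [Set.mem_union]
  · exact disjoint_filter.2 fun _ _ hs ht => Set.disjoint_left.1 h hs ht

variable {x N}

theorem freq_eq_one (hx : ∀ n, x n ∈ s) (hN : N ≠ 0) : freq x s N = 1 := by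
  simp [freq, hx, hN]

end Frequency

section Discrepancy

variable {x : ℕ → ℝ} {N : ℕ} {a b c t δ : ℝ}

theorem freq_Ico_add_freq_Ico (hab : a ≤ b) (hbc : b ≤ c) :
    freq x (Set.Ico a b) N + freq x (Set.Ico b c) N = freq x (Set.Ico a c) N := by
  rw [← freq_union x N Set.Ico_disjoint_Ico_same, Set.Ico_union_Ico_eq_Ico hab hbc]

theorem abs_freq_Ico_sub_le_two_mul (ha : 0 ≤ a) (hab : a ≤ b)
    (hδa : |freq x (Set.Ico 0 a) N - a| ≤ δ) (hδb : |freq x (Set.Ico 0 b) N - b| ≤ δ) :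
    |freq x (Set.Ico a b) N - (b - a)| ≤ 2 * δ :=
  calc |freq x (Set.Ico a b) N - (b - a)|
      = |(freq x (Set.Ico 0 b) N - b) - (freq x (Set.Ico 0 a) N - a)| := by
        rw [← freq_Ico_add_freq_Ico ha hab]
        ring_nf
    _ ≤ |freq x (Set.Ico 0 b) N - b| + |freq x (Set.Ico 0 a) N - a| := abs_sub _ _
    _ ≤ 2 * δ := by linarith

theorem discSeq_eq_sSup_freq (x : ℕ → ℝ) (N : ℕ) :
    discSeq x N = sSup {d : ℝ | ∃ a b : ℝ, 0 ≤ a ∧ a < b ∧ b < 1 ∧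
      d = |freq x (Set.Ico a b) N - (b - a)|} := by
  unfold discSeq freq
  congr!

theorem discSeq_nonneg (x : ℕ → ℝ) (N : ℕ) : 0 ≤ discSeq x N := by
  apply Real.sSup_nonneg
  rintro _ ⟨a, b, -, -, -, rfl⟩
  exact abs_nonneg _

theorem abs_freq_Ico_sub_le_discSeq (ha : 0 ≤ a) (hab : a < b) (hb : b < 1) :
    |freq x (Set.Ico a b) N - (b - a)| ≤ discSeq x N := by
  rw [discSeq_eq_sSup_freq]
  refine le_csSup ⟨1, ?_⟩ ⟨a, b, ha, hab, hb, rfl⟩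
  rintro _ ⟨a, b, ha, hab, hb, rfl⟩
  have hnonneg := freq_nonneg x (Set.Ico a b) N
  have hle_one := freq_le_one x (Set.Ico a b) N
  exact abs_le.2 ⟨by linarith, by linarith⟩

theorem discSeq_le_two_mul (h : ∀ t, 0 ≤ t → t < 1 → |freq x (Set.Ico 0 t) N - t| ≤ δ) :
    discSeq x N ≤ 2 * δ := by
  have hδ : 0 ≤ δ := (abs_nonneg _).trans (h 0 le_rfl one_pos)
  rw [discSeq_eq_sSup_freq]
  refine Real.sSup_le ?_ (by positivity)
  rintro _ ⟨a, b, ha, hab, hb, rfl⟩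
  exact abs_freq_Ico_sub_le_two_mul ha hab.le (h a ha (hab.trans hb)) (h b (ha.trans hab.le) hb)

theorem abs_freq_Ico_zero_sub_le_discSeq (hx : ∀ n, x n ∈ Set.Ico (0 : ℝ) 1) (hN : N ≠ 0)
    (ht₀ : 0 ≤ t) (ht₁ : t ≤ 1) : |freq x (Set.Ico 0 t) N - t| ≤ discSeq x N := by
  rcases ht₀.eq_or_lt with rfl | ht₀
  · simpa [freq_empty] using discSeq_nonneg x N
  rcases ht₁.eq_or_lt with rfl | ht₁
  · simpa [freq_eq_one hx hN] using discSeq_nonneg x N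
  · simpa using abs_freq_Ico_sub_le_discSeq (x := x) (N := N) le_rfl ht₀ ht₁

theorem tendsto_freq_Ico_of_tendsto_discSeq (hx : ∀ n, x n ∈ Set.Ico (0 : ℝ) 1)
    (h : Tendsto (discSeq x) atTop (𝓝 0)) (ha : 0 ≤ a) (hab : a ≤ b) (hb : b ≤ 1) :
    Tendsto (freq x (Set.Ico a b)) atTop (𝓝 (b - a)) := by
  rw [tendsto_iff_norm_sub_tendsto_zero]
  refine squeeze_zero' (Eventually.of_forall fun _ => norm_nonneg _) ?_
    (by simpa using h.const_mul 2)
  filter_upwards [eventually_ne_atTop 0] with N hN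
  exact abs_freq_Ico_sub_le_two_mul ha hab
    (abs_freq_Ico_zero_sub_le_discSeq hx hN ha (hab.trans hb))
    (abs_freq_Ico_zero_sub_le_discSeq hx hN (ha.trans hab) hb)

end Discrepancy

section Grid

variable {x : ℕ → ℝ} {q N n m b : ℕ} {y t : ℝ}

/-- The `m`-th cell of the grid of mesh `1 / q`, counted from `m = 0`; the cells with `m < q`
partition `[0, 1)`. -/
def gridCell (q m : ℕ) : Set ℝ := Set.Ico (m / q) ((m + 1) / q)

theorem mem_gridCell_iff (hq : 0 < q) (hy : 0 ≤ y) : y ∈ gridCell q m ↔ ⌊y * q⌋₊ = m := by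
  have hq' : (0 : ℝ) < q := by exact_mod_cast hq
  rw [gridCell, Set.mem_Ico, div_le_iff₀ hq', lt_div_iff₀ hq', Nat.floor_eq_iff (by positivity)]

theorem sum_range_freq_gridCell (x : ℕ → ℝ) (q N n : ℕ) :
    ∑ m ∈ range n, freq x (gridCell q m) N = freq x (Set.Ico 0 (n / q)) N := by
  induction n with
  | zero => simp [freq_empty]
  | succ n ih =>
    rw [sum_range_succ, ih, Nat.cast_succ]
    exact freq_Ico_add_freq_Ico (by positivity) (by gcongr; linarith)

/-- The total error made on the `q` cells of the grid of mesh `1 / q` when the proportion of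
`x 1, …, x N` in a cell is replaced by its length. -/
noncomputable def gridError (x : ℕ → ℝ) (q N : ℕ) : ℝ :=
  ∑ m ∈ range q, |freq x (gridCell q m) N - 1 / q|

theorem tendsto_gridError (h : ∀ m < q, Tendsto (freq x (gridCell q m)) atTop (𝓝 (1 / q))) :
    Tendsto (gridError x q) atTop (𝓝 0) := by
  have hcell : ∀ m ∈ range q, Tendsto (fun N => |freq x (gridCell q m) N - 1 / q|) atTop (𝓝 0) :=
    fun m hm => tendsto_iff_norm_sub_tendsto_zero.1 (h m (mem_range.1 hm))
  have hsum := tendsto_finsetSum _ hcell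
  rwa [sum_const_zero] at hsum

theorem abs_freq_Ico_zero_div_sub_le_gridError (hn : n ≤ q) :
    |freq x (Set.Ico 0 (n / q)) N - n / q| ≤ gridError x q N :=
  calc |freq x (Set.Ico 0 (n / q)) N - n / q|
      = |∑ m ∈ range n, (freq x (gridCell q m) N - 1 / q)| := by
        rw [sum_sub_distrib, sum_range_freq_gridCell, sum_const, card_range, nsmul_eq_mul,
          mul_one_div]
    _ ≤ ∑ m ∈ range n, |freq x (gridCell q m) N - 1 / q| := abs_sum_le_sum_abs _ _
    _ ≤ gridError x q N := sum_le_sum_of_subset_of_nonneg (range_subset_range.2 hn)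
        fun _ _ _ => abs_nonneg _

theorem abs_freq_Ico_zero_sub_le_gridError (hq : 0 < q) (ht₀ : 0 ≤ t) (ht₁ : t < 1) :
    |freq x (Set.Ico 0 t) N - t| ≤ gridError x q N + 1 / q := by
  obtain ⟨m, hm⟩ : ∃ m, ⌊t * q⌋₊ = m := ⟨_, rfl⟩
  have hq' : (0 : ℝ) < q := by exact_mod_cast hq
  have hmq : m < q := by
    rw [← hm, Nat.floor_lt (by positivity)]
    exact mul_lt_of_lt_one_left hq' ht₁
  obtain ⟨hmt, htm⟩ : m / q ≤ t ∧ t < (m + 1) / q := (mem_gridCell_iff hq ht₀).2 hm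
  have hlower : freq x (Set.Ico 0 (m / q)) N ≤ freq x (Set.Ico 0 t) N :=
    freq_mono x N (Set.Ico_subset_Ico_right hmt)
  have hupper : freq x (Set.Ico 0 t) N ≤ freq x (Set.Ico 0 ((m + 1) / q)) N :=
    freq_mono x N (Set.Ico_subset_Ico_right htm.le)
  have herr := abs_freq_Ico_zero_div_sub_le_gridError (x := x) (N := N) hmq.le
  have herr_succ := abs_freq_Ico_zero_div_sub_le_gridError (x := x) (N := N) hmq
  push_cast at herr_succ
  rw [abs_le] at herr herr_succ ⊢
  have hmesh : ((m + 1) / q : ℝ) = m / q + 1 / q := add_div _ _ _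
  constructor <;> linarith

theorem discSeq_le_gridError (hq : 0 < q) : discSeq x N ≤ 2 * (gridError x q N + 1 / q) :=
  discSeq_le_two_mul fun _ => abs_freq_Ico_zero_sub_le_gridError hq

theorem tendsto_discSeq_of_frequently_gridCell
    (h : ∃ᶠ q : ℕ in atTop, ∀ m < q, Tendsto (freq x (gridCell q m)) atTop (𝓝 (1 / q))) :
    Tendsto (discSeq x) atTop (𝓝 0) := by
  refine tendsto_order.2 ⟨fun ε hε => Eventually.of_forall fun N =>
    hε.trans_le (discSeq_nonneg x N), fun ε hε => ?_⟩
  have hsmall : ∀ᶠ q : ℕ in atTop, (1 / q : ℝ) < ε / 4 :=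
    tendsto_one_div_atTop_nhds_zero_nat.eventually_lt_const (by positivity)
  obtain ⟨q, hcell, hmesh, hq⟩ := (h.and_eventually (hsmall.and (eventually_gt_atTop 0))).exists
  filter_upwards [(tendsto_gridError hcell).eventually_lt_const (by positivity : 0 < ε / 4)]
    with N hN
  linarith [discSeq_le_gridError (x := x) (N := N) hq]

theorem tendsto_discSeq_iff_forall_gridCell (hx : ∀ n, x n ∈ Set.Ico (0 : ℝ) 1) (hb : 1 < b) :
    Tendsto (discSeq x) atTop (𝓝 0) ↔ ∀ k, 1 ≤ k → ∀ m < b ^ k,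
      Tendsto (freq x (gridCell (b ^ k) m)) atTop (𝓝 (1 / (b ^ k : ℕ))) := by
  refine ⟨fun h k _ m hm => ?_, fun h => tendsto_discSeq_of_frequently_gridCell ?_⟩
  · have hlength : ((m + 1) / (b ^ k : ℕ) - m / (b ^ k : ℕ) : ℝ) = 1 / (b ^ k : ℕ) := by ring
    have hle_one : ((m + 1) / (b ^ k : ℕ) : ℝ) ≤ 1 :=
      div_le_one_of_le₀ (by exact_mod_cast hm) (Nat.cast_nonneg _)
    rw [← hlength]
    exact tendsto_freq_Ico_of_tendsto_discSeq hx h (by positivity) (by gcongr; linarith) hle_one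
  · exact (tendsto_pow_atTop_atTop_of_one_lt hb).frequently
      ((eventually_ge_atTop 1).mono h).frequently

end Grid

section Digits

variable {y : ℝ} {i k : ℕ}

theorem digit_fract (α : ℝ) (i j : ℕ) :
    digit (Int.fract (10 ^ i * α)) (j + 1) = digit α (i + (j + 1)) := by
  have hshift : Int.fract (10 ^ i * α) * 10 ^ (j + 1) =
      α * 10 ^ (i + (j + 1)) - (⌊10 ^ i * α⌋ * 10 ^ j * 10 : ℤ) := by
    rw [Int.fract]
    push_cast
    ring
  rw [digit, digit, hshift, Int.floor_sub_intCast, Int.sub_mul_emod_self_right]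

theorem digit_eq_natFloor_mod (hy : 0 ≤ y) (i : ℕ) : digit y i = ⌊y * 10 ^ i⌋₊ % 10 := by
  rw [digit, ← Int.natCast_floor_eq_floor (by positivity)]
  omega

theorem digit_eq_natFloor_div_mod (hy : 0 ≤ y) (hik : i ≤ k) :
    digit y i = ⌊y * (10 ^ k : ℕ)⌋₊ / 10 ^ (k - i) % 10 := by
  obtain ⟨j, rfl⟩ := Nat.exists_eq_add_of_le hik
  rw [digit_eq_natFloor_mod hy, Nat.add_sub_cancel_left, ← Nat.floor_div_natCast]
  congr 2
  push_cast
  field_simp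
  ring

/-- The value of a block of `k` digits in base `b`, the first digit being the most significant. -/
def blockValue {b k : ℕ} : (Fin k → Fin b) ≃ Fin (b ^ k) :=
  (Fin.revPerm.arrowCongr (Equiv.refl _)).trans finFunctionFinEquiv

theorem blockValue_symm_apply {b k : ℕ} (v : Fin (b ^ k)) (j : Fin k) :
    (blockValue.symm v j : ℕ) = v / b ^ (k - (j + 1)) % b := by
  simp [blockValue, Equiv.arrowCongr, finFunctionFinEquiv, Fin.val_rev]

theorem forall_digit_eq_iff_mem_gridCell (hy : y ∈ Set.Ico (0 : ℝ) 1) (B : Fin k → Fin 10) :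
    (∀ j : Fin k, digit y (j + 1) = B j) ↔ y ∈ gridCell (10 ^ k) (blockValue B) := by
  have hlt : ⌊y * (10 ^ k : ℕ)⌋₊ < 10 ^ k := by
    rw [Nat.floor_lt (mul_nonneg hy.1 (Nat.cast_nonneg _))]
    exact mul_lt_of_lt_one_left (by positivity) hy.2
  have hdigit (j : Fin k) : digit y (j + 1) = blockValue.symm ⟨_, hlt⟩ j := by
    rw [blockValue_symm_apply, digit_eq_natFloor_div_mod hy.1 j.isLt]
  simp_rw [hdigit, ← Fin.ext_iff]
  rw [mem_gridCell_iff (by positivity) hy.1, ← funext_iff, Equiv.symm_apply_eq, Fin.ext_iff]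

end Digits

section Blocks

variable {k n : ℕ}

/-- The sequence `10 ^ (n - 1) * α mod 1`, `n ≥ 1`, whose discrepancy is `D α`; because of the
truncated subtraction, the values at `0` and at `1` agree. -/
noncomputable def decimalShift (α : ℝ) (n : ℕ) : ℝ := Int.fract (10 ^ (n - 1) * α)

theorem decimalShift_mem_Ico (α : ℝ) (n : ℕ) : decimalShift α n ∈ Set.Ico (0 : ℝ) 1 :=
  ⟨Int.fract_nonneg _, Int.fract_lt_one _⟩

theorem forall_digit_add_eq_iff (α : ℝ) (B : Fin k → Fin 10) (hn : 1 ≤ n) :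
    (∀ j : Fin k, digit α (n + j) = B j) ↔
      decimalShift α n ∈ gridCell (10 ^ k) (blockValue B) := by
  have hdigit (j : Fin k) : digit α (n + j) = digit (decimalShift α n) (j + 1) := by
    rw [decimalShift, digit_fract]
    congr 1
    omega
  simp_rw [hdigit]
  exact forall_digit_eq_iff_mem_gridCell (decimalShift_mem_Ico α n) B

theorem occ_le_card_gridCell (α : ℝ) (B : Fin k → Fin 10) (N : ℕ) :
    occ α B N ≤ #{n ∈ Icc 1 N | decimalShift α n ∈ gridCell (10 ^ k) (blockValue B)} := by
  refine card_le_card fun n hn => ?_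
  obtain ⟨hnN, -, hB⟩ := mem_filter.1 hn
  exact mem_filter.2 ⟨hnN, (forall_digit_add_eq_iff α B (mem_Icc.1 hnN).1).1 hB⟩

theorem card_gridCell_le_occ_add (α : ℝ) (B : Fin k → Fin 10) (N : ℕ) :
    #{n ∈ Icc 1 N | decimalShift α n ∈ gridCell (10 ^ k) (blockValue B)} ≤ occ α B N + k := by
  have hsub : {n ∈ Icc 1 N | decimalShift α n ∈ gridCell (10 ^ k) (blockValue B)} ⊆
      {n ∈ Icc 1 N | n + k ≤ N + 1 ∧ ∀ j : Fin k, digit α (n + j) = B j} ∪ Ioc (N - k) N := by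
    intro n hn
    obtain ⟨hnN, hcell⟩ := mem_filter.1 hn
    have hB := (forall_digit_add_eq_iff α B (mem_Icc.1 hnN).1).2 hcell
    by_cases hfit : n + k ≤ N + 1
    · exact mem_union_left _ (mem_filter.2 ⟨hnN, hfit, hB⟩)
    · rw [mem_Icc] at hnN
      exact mem_union_right _ (mem_Ioc.2 (by omega))
  calc _ ≤ occ α B N + #(Ioc (N - k) N) := (card_le_card hsub).trans (card_union_le _ _)
    _ ≤ occ α B N + k := by
      rw [Nat.card_Ioc]
      omega

theorem abs_occ_div_sub_freq_le (α : ℝ) (B : Fin k → Fin 10) (N : ℕ) :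
    |(occ α B N : ℝ) / N - freq (decimalShift α) (gridCell (10 ^ k) (blockValue B)) N| ≤ k / N := by
  have hle := (Nat.cast_le (α := ℝ)).2 (occ_le_card_gridCell α B N)
  have hge := (Nat.cast_le (α := ℝ)).2 (card_gridCell_le_occ_add α B N)
  push_cast at hge
  rw [freq, ← sub_div, abs_div, Nat.abs_cast]
  gcongr
  exact abs_le.2 ⟨by linarith, by linarith [k.cast_nonneg (α := ℝ)]⟩

theorem tendsto_occ_div_iff (α : ℝ) (B : Fin k → Fin 10) (c : ℝ) :
    Tendsto (fun N : ℕ => (occ α B N : ℝ) / N) atTop (𝓝 c) ↔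
      Tendsto (freq (decimalShift α) (gridCell (10 ^ k) (blockValue B))) atTop (𝓝 c) :=
  tendsto_iff_of_dist <| squeeze_zero (fun _ => dist_nonneg)
    (abs_occ_div_sub_freq_le α B) (tendsto_const_div_atTop_nhds_zero_nat (k : ℝ))

end Blocks

theorem normal_iff_discrepancy_tendsto_zero_general (α : ℝ) :
    (∀ k : ℕ, 1 ≤ k → ∀ B : Fin k → Fin 10,
      Tendsto (fun N : ℕ => (occ α B N : ℝ) / N) atTop (𝓝 (1 / 10 ^ k)))
    ↔ Tendsto (fun N : ℕ => D α N) atTop (𝓝 0) := by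
  have hD := tendsto_discSeq_iff_forall_gridCell (decimalShift_mem_Ico α) (b := 10) (by norm_num)
  refine Iff.trans (forall₂_congr fun k _ => ?_) hD.symm
  simp_rw [tendsto_occ_div_iff, blockValue.forall_congr_left, Equiv.apply_symm_apply,
    Fin.forall_iff, Nat.cast_pow, Nat.cast_ofNat]

/-- A real number `α ∈ [0,1)` is normal in base 10 (all blocks of each length `k`
occur with asymptotic frequency `10^{−k}`) if and only if its discrepancy for
base 10 tends to zero. -/
theorem normal_iff_discrepancy_tendsto_zero (α : ℝ) (hα : α ∈ Set.Ico (0 : ℝ) 1) :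
    (∀ k : ℕ, 1 ≤ k → ∀ B : Fin k → Fin 10,
      Filter.Tendsto (fun N : ℕ => (occ α B N : ℝ) / N) Filter.atTop
        (nhds (1 / 10 ^ k)))
    ↔ Filter.Tendsto (fun N : ℕ => D α N) Filter.atTop (nhds 0) :=
  normal_iff_discrepancy_tendsto_zero_general α
end
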